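/- Let Γ be a finite-index subgroup of SL₂(ℤ) and let P ⊆ ℚ ∪ {∞} be the Γ-orbit of a cusp. Then for every ε > 0, for Lebesgue-almost every θ ∈ [0,1] there exist infinitely many reduced fractions p/q ∈ P with |θ − p/q| ≤ ε/q². -/

import Mathlib

open Matrix MeasureTheory

/-- The orbit of a cusp `x : ℚ` under a subgroup `Γ ≤ SL₂(ℤ)` acting by Möbius
transformations (keeping only the images that are finite, i.e. not ∞). -/
def cuspOrbit (Γ : Subgroup (Matrix.SpecialLinearGroup (Fin 2) ℤ)) (x : ℚ) : Set ℚ :=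
  {y : ℚ | ∃ γ ∈ Γ,
    (((γ : Matrix (Fin 2) (Fin 2) ℤ) 1 0 : ℚ) * x + ((γ : Matrix (Fin 2) (Fin 2) ℤ) 1 1 : ℚ)) ≠ 0 ∧
    y = (((γ : Matrix (Fin 2) (Fin 2) ℤ) 0 0 : ℚ) * x + ((γ : Matrix (Fin 2) (Fin 2) ℤ) 0 1 : ℚ)) /
        (((γ : Matrix (Fin 2) (Fin 2) ℤ) 1 0 : ℚ) * x + ((γ : Matrix (Fin 2) (Fin 2) ℤ) 1 1 : ℚ))}

/-!
Let `p / q` be a Dirichlet approximation of an irrational `θ`. Complete `(p, q)` to a matrix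
`g ∈ SL₂(ℤ)` whose second column `(p', q')` satisfies `|q'| ≤ q` and `|q' θ - p'| ≤ 2 / q`. As `Γ`
has finite index, `g * k ∈ Γ` for some `k` taken from a fixed finite set of coset representatives,
so the cusp `(g * k) x` is the image under `g` of one of finitely many vectors `k x`. It therefore
approximates `θ` as well as `p / q` does, up to a constant depending only on `Γ` and `x`. Hence
every irrational `θ` is approximable by the orbit to within `C / q ^ 2`; Cassels' lemma, a
consequence of Lebesgue's density theorem, allows `C` to be replaced by any `ε > 0` for almost
every `θ`.
-/

open Filter Metric
open scoped Topology MatrixGroups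

/-- `θ` is approximable by `P` at the rate `ψ`: there are reduced fractions `p / q ∈ P` with
arbitrarily large denominators and `|θ - p / q| ≤ ψ q`. As there are only finitely many fractions
with a given denominator in a bounded interval, this amounts to having infinitely many such `p / q`
when `ψ` is bounded. -/
def IsApproximableBy (P : Set ℚ) (ψ : ℕ → ℝ) (θ : ℝ) : Prop :=
  ∀ N : ℕ, ∃ r ∈ P, N < r.den ∧ |θ - (r : ℝ)| ≤ ψ r.den

lemma ae_frequently_exists_dist_le_mul {X : Type*} [PseudoMetricSpace X]
    [SecondCountableTopology X] [MeasurableSpace X] [BorelSpace X] (μ : Measure X)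
    [IsLocallyFiniteMeasure μ] [IsUnifLocDoublingMeasure μ] (s : ℕ → Set X) {ψ : ℕ → ℝ}
    (hψ_pos : ∀ᶠ n in atTop, 0 < ψ n) (hψ : Tendsto ψ atTop (𝓝 0)) {c : ℝ} (hc : 0 < c) :
    ∀ᵐ x ∂μ, (∃ᶠ n in atTop, ∃ y ∈ s n, dist x y ≤ ψ n) →
      ∃ᶠ n in atTop, ∃ y ∈ s n, dist x y ≤ c * ψ n := by
  -- Closed thickenings need not attain their distance; the factor `1 / 2` makes room for that.
  have cassels := blimsup_cthickening_mul_ae_eq μ (fun _ ↦ True) s (half_pos hc) ψ hψ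
  simp only [blimsup_true] at cassels
  filter_upwards [cassels.mem_iff] with x hx hfreq
  simp only [mem_limsup_iff_frequently_mem] at hx
  have hthick : ∃ᶠ n in atTop, x ∈ cthickening (c / 2 * ψ n) (s n) :=
    hx.2 (hfreq.mono fun n ⟨y, hy, hxy⟩ ↦ mem_cthickening_of_dist_le x y _ _ hy hxy)
  refine (hthick.and_eventually hψ_pos).mono fun n ⟨hxn, hn⟩ ↦ ?_
  have hlt : c / 2 * ψ n < c * ψ n := by gcongr; exact half_lt_self hc
  obtain ⟨y, hy, hxy⟩ := mem_thickening_iff.1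
    (cthickening_subset_thickening' (by positivity) hlt _ hxn)
  exact ⟨y, hy, hxy.le⟩

lemma isApproximableBy_iff_frequently {P : Set ℚ} {ψ : ℕ → ℝ} {θ : ℝ} :
    IsApproximableBy P ψ θ ↔
      ∃ᶠ n in atTop, ∃ y ∈ ((↑) : ℚ → ℝ) '' {r ∈ P | r.den = n}, dist θ y ≤ ψ n := by
  simp only [IsApproximableBy, frequently_atTop', Set.exists_mem_image, Set.mem_ofPred_eq,
    Real.dist_eq]
  refine forall_congr' fun N ↦ ⟨fun ⟨r, hr, hN, hθ⟩ ↦ ⟨r.den, hN, r, ⟨hr, rfl⟩, hθ⟩, ?_⟩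
  rintro ⟨_, hN, r, ⟨hr, rfl⟩, hθ⟩
  exact ⟨r, hr, hN, hθ⟩

namespace IsApproximableBy

lemma mono {P : Set ℚ} {ψ φ : ℕ → ℝ} {θ : ℝ} (h : IsApproximableBy P ψ θ)
    (hψφ : ∀ q, ψ q ≤ φ q) : IsApproximableBy P φ θ :=
  fun N ↦ (h N).imp fun _ ⟨hr, hN, hθ⟩ ↦ ⟨hr, hN, hθ.trans (hψφ _)⟩

lemma ae_const_mul (P : Set ℚ) {ψ : ℕ → ℝ} (hψ_pos : ∀ᶠ n in atTop, 0 < ψ n)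
    (hψ : Tendsto ψ atTop (𝓝 0)) {c : ℝ} (hc : 0 < c) :
    ∀ᵐ θ : ℝ, IsApproximableBy P ψ θ → IsApproximableBy P (fun q ↦ c * ψ q) θ := by
  simp only [isApproximableBy_iff_frequently]
  exact ae_frequently_exists_dist_le_mul volume _ hψ_pos hψ hc

lemma ae_forall_div_sq (P : Set ℚ) {C : ℝ} (hC : 0 < C) :
    ∀ᵐ θ : ℝ, IsApproximableBy P (fun q ↦ C / (q : ℝ) ^ 2) θ →
      ∀ ε : ℝ, 0 < ε → IsApproximableBy P (fun q ↦ ε / (q : ℝ) ^ 2) θ := by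
  have hpos : ∀ᶠ q : ℕ in atTop, 0 < C / (q : ℝ) ^ 2 := by
    filter_upwards [eventually_gt_atTop 0] with q hq
    positivity
  have hlim : Tendsto (fun q : ℕ ↦ C / (q : ℝ) ^ 2) atTop (𝓝 0) :=
    tendsto_const_nhds.div_atTop
      ((tendsto_pow_atTop two_ne_zero).comp tendsto_natCast_atTop_atTop)
  have hall : ∀ᵐ θ : ℝ, ∀ m : ℕ, IsApproximableBy P (fun q ↦ C / (q : ℝ) ^ 2) θ →
      IsApproximableBy P (fun q ↦ 1 / (m + 1 : ℝ) * (C / (q : ℝ) ^ 2)) θ :=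
    ae_all_iff.2 fun m ↦ ae_const_mul P hpos hlim Nat.one_div_pos_of_nat
  filter_upwards [hall] with θ hθ happ ε hε
  obtain ⟨m, hm⟩ := exists_nat_one_div_lt (div_pos hε hC)
  refine (hθ m happ).mono fun q ↦ ?_
  calc 1 / (m + 1 : ℝ) * (C / (q : ℝ) ^ 2)
      ≤ ε / C * (C / (q : ℝ) ^ 2) := by gcongr
    _ = ε / (q : ℝ) ^ 2 := by field_simp

end IsApproximableBy

lemma exists_pos_forall_lt_den_of_irrational {θ : ℝ} (hθ : Irrational θ) (N : ℕ) :
    ∃ δ : ℝ, 0 < δ ∧ ∀ r : ℚ, |θ - (r : ℝ)| < δ → N < r.den := by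
  obtain ⟨δ, hδ, hδ_pos⟩ :=
    (((hθ.eventually_forall_le_dist_cast_rat_of_den_le N).filter_mono nhdsWithin_le_nhds).and
      (self_mem_nhdsWithin : Set.Ioi (0 : ℝ) ∈ 𝓝[>] 0)).exists
  refine ⟨δ, hδ_pos, fun r hr ↦ ?_⟩
  by_contra! hN
  exact (hδ r hN).not_gt hr

lemma isApproximableBy_univ_of_irrational {θ : ℝ} (hθ : Irrational θ) :
    IsApproximableBy Set.univ (fun q ↦ 1 / (q : ℝ) ^ 2) θ := by
  intro N
  obtain ⟨δ, hδ, hden⟩ := exists_pos_forall_lt_den_of_irrational hθ N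
  obtain ⟨n, hn⟩ := exists_nat_one_div_lt hδ
  obtain ⟨r, hr, hrn⟩ := Real.exists_rat_abs_sub_le_and_den_le θ n.succ_pos
  have hr_one : (1 : ℝ) ≤ r.den := mod_cast r.pos
  have hr_le : (r.den : ℝ) ≤ n + 1 := mod_cast hrn
  push_cast at hr
  refine ⟨r, Set.mem_univ r, hden r (lt_of_le_of_lt (hr.trans ?_) hn), hr.trans ?_⟩ <;>
    exact one_div_le_one_div_of_le (by positivity) (by nlinarith)

lemma abs_sub_intCast_div (θ : ℝ) (p : ℤ) {q : ℤ} (hq : q ≠ 0) :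
    |θ - ((p / q : ℚ) : ℝ)| = |q * θ - p| / |(q : ℝ)| := by
  have hq' : (q : ℝ) ≠ 0 := mod_cast hq
  rw [← abs_div]
  congr 1
  push_cast
  field_simp

lemma den_intCast_div_le_natAbs (p : ℤ) {q : ℤ} (hq : q ≠ 0) :
    (p / q : ℚ).den ≤ q.natAbs := by
  have hdvd : ((p / q : ℚ).den : ℤ) ∣ q := by
    simpa only [Rat.divInt_eq_div] using Rat.den_dvd p q
  exact Nat.le_of_dvd (Int.natAbs_pos.2 hq) (Int.natCast_dvd.1 hdvd)

lemma abs_sub_intCast_div_le_div_den_sq {θ C : ℝ} {p q : ℤ} (hq : q ≠ 0)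
    (h : |(q : ℝ)| * |q * θ - p| ≤ C) :
    |θ - ((p / q : ℚ) : ℝ)| ≤ C / ((p / q : ℚ).den : ℝ) ^ 2 := by
  have : 0 < |(q : ℝ)| := by simpa using hq
  have : (0 : ℝ) < (p / q : ℚ).den := mod_cast Rat.den_pos _
  have hden_le : ((p / q : ℚ).den : ℝ) ≤ |(q : ℝ)| := by
    rw [← Int.cast_abs, ← Nat.cast_natAbs]
    exact mod_cast den_intCast_div_le_natAbs p hq
  have hC : 0 ≤ C := le_trans (by positivity) h
  calc |θ - ((p / q : ℚ) : ℝ)|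
      = |(q : ℝ)| * |q * θ - p| / |(q : ℝ)| ^ 2 := by
        rw [abs_sub_intCast_div θ p hq]
        field_simp
    _ ≤ C / |(q : ℝ)| ^ 2 := by gcongr
    _ ≤ C / ((p / q : ℚ).den : ℝ) ^ 2 := by gcongr

lemma exists_SL2_col_abs_le {p q : ℤ} (hpq : IsCoprime p q) (hq : q ≠ 0) :
    ∃ g : SL(2, ℤ), g 0 0 = p ∧ g 1 0 = q ∧ |g 1 1| ≤ |q| := by
  obtain ⟨g, hp, hq'⟩ := hpq.exists_SL2_col 0
  refine ⟨g * ModularGroup.T ^ (-(g 1 1 / q)), ?_, ?_, ?_⟩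
  · simp [ModularGroup.coe_T_zpow, Matrix.mul_apply, hp]
  · simp [ModularGroup.coe_T_zpow, Matrix.mul_apply, hq']
  · have hemod : (g * ModularGroup.T ^ (-(g 1 1 / q))) 1 1 = g 1 1 % q := by
      rw [Int.emod_def, sub_eq_neg_add]
      simp [ModularGroup.coe_T_zpow, Matrix.mul_apply, hq']
    rw [hemod, abs_of_nonneg (Int.emod_nonneg _ hq)]
    exact (Int.emod_lt_abs _ hq).le

lemma exists_SL2_col_approx {θ : ℝ} {r : ℚ} (hr : |θ - (r : ℝ)| ≤ 1 / (r.den : ℝ) ^ 2) :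
    ∃ g : SL(2, ℤ), g 1 0 = r.den ∧ |g 1 0 * θ - g 0 0| ≤ 1 / r.den ∧
      |(g 1 1 : ℝ)| ≤ r.den ∧ |g 1 1 * θ - g 0 1| ≤ 2 / r.den := by
  have hq : (0 : ℝ) < r.den := mod_cast r.den_pos
  obtain ⟨g, hg₀₀, hg₁₀, hg₁₁⟩ :=
    exists_SL2_col_abs_le (Rat.isCoprime_num_den r) (Nat.cast_ne_zero.2 r.den_ne_zero)
  have hg₁₁' : |(g 1 1 : ℝ)| ≤ r.den := mod_cast hg₁₁
  have hcol₀ : |r.den * θ - r.num| ≤ 1 / r.den := by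
    calc |r.den * θ - r.num|
        = r.den * |θ - (r : ℝ)| := by
          nth_rw 2 [← abs_of_pos hq]
          rw [← abs_mul, mul_sub, Rat.cast_def, mul_div_cancel₀ _ hq.ne']
      _ ≤ r.den * (1 / (r.den : ℝ) ^ 2) := by gcongr
      _ = 1 / r.den := by field_simp
  have hcol₁ : g 1 1 * θ - g 0 1 = (g 1 1 * (r.den * θ - r.num) + 1) / r.den := by
    have hdet : (r.num : ℝ) * g 1 1 - g 0 1 * r.den = 1 := by
      have := g.det_coe
      rw [Matrix.det_fin_two, hg₀₀, hg₁₀] at this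
      exact mod_cast this
    field_simp
    linear_combination hdet
  refine ⟨g, hg₁₀, by simpa [hg₀₀, hg₁₀] using hcol₀, hg₁₁', ?_⟩
  rw [hcol₁, abs_div, abs_of_pos hq]
  gcongr
  calc |g 1 1 * (r.den * θ - r.num) + 1|
      ≤ |(g 1 1 : ℝ)| * |r.den * θ - r.num| + 1 := by
        simpa only [abs_mul, abs_one] using abs_add_le (g 1 1 * (r.den * θ - r.num)) 1
    _ ≤ r.den * (1 / r.den) + 1 := by gcongr
    _ = 2 := by field_simp; norm_num

lemma abs_mul_add_mul_le_mul_norm {a b A B : ℝ} (ha : |a| ≤ A) (hb : |b| ≤ B) (v : Fin 2 → ℤ) :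
    |a * v 0 + b * v 1| ≤ (A + B) * ‖v‖ := by
  have hv (i : Fin 2) : |(v i : ℝ)| ≤ ‖v‖ := norm_le_pi_norm v i
  calc |a * v 0 + b * v 1|
      ≤ |a| * |(v 0 : ℝ)| + |b| * |(v 1 : ℝ)| := by
        simpa only [abs_mul] using abs_add_le (a * v 0) (b * v 1)
    _ ≤ A * ‖v‖ + B * ‖v‖ := by
        have hA := (abs_nonneg a).trans ha
        have hB := (abs_nonneg b).trans hb
        gcongr <;> exact hv _
    _ = (A + B) * ‖v‖ := by ring

lemma exists_SL2_forall_abs_mulVec_le {θ : ℝ} {r : ℚ}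
    (hr : |θ - (r : ℝ)| ≤ 1 / (r.den : ℝ) ^ 2) :
    ∃ g : SL(2, ℤ), ∀ v : Fin 2 → ℤ,
      |((g.1 *ᵥ v) 1 : ℝ)| ≤ 2 * ‖v‖ * r.den ∧
      |(g.1 *ᵥ v) 1 * θ - (g.1 *ᵥ v) 0| ≤ 3 * ‖v‖ / r.den := by
  obtain ⟨g, hg₁₀, hcol₀, hg₁₁, hcol₁⟩ := exists_SL2_col_approx hr
  have hg₁₀' : |(g 1 0 : ℝ)| ≤ r.den := by simp [hg₁₀]
  refine ⟨g, fun v ↦ ⟨?_, ?_⟩⟩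
  · calc |((g.1 *ᵥ v) 1 : ℝ)|
        = |(g 1 0 : ℝ) * v 0 + g 1 1 * v 1| := by
          simp [mulVec, dotProduct, Fin.sum_univ_two]
      _ ≤ (r.den + r.den) * ‖v‖ := abs_mul_add_mul_le_mul_norm hg₁₀' hg₁₁ v
      _ = 2 * ‖v‖ * r.den := by ring
  · calc |(g.1 *ᵥ v) 1 * θ - (g.1 *ᵥ v) 0|
        = |(g 1 0 * θ - g 0 0) * v 0 + (g 1 1 * θ - g 0 1) * v 1| := by
          simp only [mulVec, dotProduct, Fin.sum_univ_two]
          push_cast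
          ring_nf
      _ ≤ (1 / r.den + 2 / r.den) * ‖v‖ := abs_mul_add_mul_le_mul_norm hcol₀ hcol₁ v
      _ = 3 * ‖v‖ / r.den := by ring

lemma exists_forall_exists_mul_mem_le {G α : Type*} [Group G] [Preorder α] [Nonempty α]
    [IsDirectedOrder α] (H : Subgroup G) [H.FiniteIndex] (f : G → α) :
    ∃ K, ∀ g, ∃ k, g * k ∈ H ∧ f k ≤ K := by
  obtain ⟨S, hS, -⟩ := H.exists_isComplement_left 1
  obtain ⟨K, hK⟩ := (hS.finite_left.image f).bddAbove
  refine ⟨K, fun g ↦ ?_⟩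
  obtain ⟨k, hk, -⟩ := Subgroup.isComplement_iff_existsUnique_inv_mul_mem.1 hS g⁻¹
  exact ⟨k, by simpa using H.inv_mem hk, hK ⟨k, k.2, rfl⟩⟩

lemma mulVec_div_mulVec_mem_cuspOrbit {Γ : Subgroup SL(2, ℤ)} {γ : SL(2, ℤ)} (hγ : γ ∈ Γ)
    {v : Fin 2 → ℤ} (hv : v 1 ≠ 0) (hγv : (γ.1 *ᵥ v) 1 ≠ 0) :
    ((γ.1 *ᵥ v) 0 / (γ.1 *ᵥ v) 1 : ℚ) ∈ cuspOrbit Γ (v 0 / v 1) := by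
  have hv' : (v 1 : ℚ) ≠ 0 := mod_cast hv
  have hrow (i : Fin 2) :
      (γ i 0 : ℚ) * (v 0 / v 1) + γ i 1 = ((γ.1 *ᵥ v) i : ℤ) / v 1 := by
    simp only [mulVec, dotProduct, Fin.sum_univ_two]
    push_cast
    field_simp
  have hγv' : ((γ.1 *ᵥ v) 1 : ℚ) ≠ 0 := mod_cast hγv
  refine ⟨γ, hγ, ?_, ?_⟩
  · rw [hrow]
    exact div_ne_zero hγv' hv'
  · rw [hrow, hrow, div_div_div_cancel_right₀ hv']

lemma ne_zero_of_abs_mul_sub_lt_one {θ : ℝ} {w : Fin 2 → ℤ} (hw : w ≠ 0)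
    (h : |w 1 * θ - w 0| < 1) : w 1 ≠ 0 := by
  intro hw₁
  have hw₀ : w 0 = 0 := by
    rw [hw₁, Int.cast_zero, zero_mul, zero_sub, abs_neg] at h
    exact Int.abs_lt_one_iff.1 (mod_cast h)
  exact hw (funext (Fin.forall_fin_two.2 ⟨hw₀, hw₁⟩))

lemma specialLinearGroup_mulVec_ne_zero {n R : Type*} [Fintype n] [DecidableEq n] [CommRing R]
    (g : SpecialLinearGroup n R) {v : n → R} (hv : v ≠ 0) : g.1 *ᵥ v ≠ 0 := by
  have hg : Function.Injective g.1.mulVec :=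
    mulVec_injective_of_isUnit ((isUnit_iff_isUnit_det _).2 (by simp))
  simpa only [mulVec_zero] using hg.ne hv

lemma exists_forall_rat_approx_exists_cuspOrbit_approx (Γ : Subgroup SL(2, ℤ)) [Γ.FiniteIndex]
    (x : ℚ) : ∃ K : ℝ, 0 < K ∧ ∀ (θ : ℝ) (r : ℚ), |θ - (r : ℝ)| ≤ 1 / (r.den : ℝ) ^ 2 →
      3 * K < r.den → ∃ p q : ℤ, q ≠ 0 ∧ (p / q : ℚ) ∈ cuspOrbit Γ x ∧
        |(q : ℝ)| ≤ 2 * K * r.den ∧ |q * θ - p| ≤ 3 * K / r.den := by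
  set v : Fin 2 → ℤ := ![x.num, x.den]
  have hv₁ : v 1 ≠ 0 := by simp [v]
  have hv : v ≠ 0 := fun h ↦ hv₁ (congrFun h 1)
  have hx : x = v 0 / v 1 := by simp [v, Rat.num_div_den]
  obtain ⟨K, hK⟩ := exists_forall_exists_mul_mem_le Γ fun k : SL(2, ℤ) ↦ ‖k.1 *ᵥ v‖
  have hK_pos : 0 < K := by
    obtain ⟨k, -, hk⟩ := hK 1
    exact (norm_pos_iff.2 (specialLinearGroup_mulVec_ne_zero k hv)).trans_le hk
  refine ⟨K, hK_pos, fun θ r hr hKr ↦ ?_⟩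
  obtain ⟨g, hg⟩ := exists_SL2_forall_abs_mulVec_le hr
  obtain ⟨k, hgk, hk⟩ := hK g
  have hr_pos : (0 : ℝ) < r.den := mod_cast r.den_pos
  set w := (g * k).1 *ᵥ v
  have hw_eq : w = g.1 *ᵥ (k.1 *ᵥ v) := (mulVec_mulVec v g.1 k.1).symm
  have hw_le : |(w 1 : ℝ)| ≤ 2 * K * r.den := by
    rw [hw_eq]
    exact (hg _).1.trans (by gcongr)
  have hwθ : |w 1 * θ - w 0| ≤ 3 * K / r.den := by
    rw [hw_eq]
    exact (hg _).2.trans (by gcongr)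
  have hw₁ : w 1 ≠ 0 := ne_zero_of_abs_mul_sub_lt_one
    (specialLinearGroup_mulVec_ne_zero _ hv) (hwθ.trans_lt ((div_lt_one hr_pos).2 hKr))
  refine ⟨w 0, w 1, hw₁, ?_, hw_le, hwθ⟩
  rw [hx]
  exact mulVec_div_mulVec_mem_cuspOrbit hgk hv₁ hw₁

lemma exists_forall_irrational_isApproximableBy_cuspOrbit (Γ : Subgroup SL(2, ℤ)) [Γ.FiniteIndex]
    (x : ℚ) : ∃ C : ℝ, 0 < C ∧ ∀ θ : ℝ, Irrational θ →
      IsApproximableBy (cuspOrbit Γ x) (fun q ↦ C / (q : ℝ) ^ 2) θ := by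
  obtain ⟨K, hK, happ⟩ := exists_forall_rat_approx_exists_cuspOrbit_approx Γ x
  refine ⟨6 * K ^ 2, by positivity, fun θ hθ N ↦ ?_⟩
  obtain ⟨δ, hδ, hden⟩ := exists_pos_forall_lt_den_of_irrational hθ N
  obtain ⟨M, hM⟩ := exists_nat_gt (max (3 * K) (3 * K / δ))
  obtain ⟨r, -, hrM, hr⟩ := isApproximableBy_univ_of_irrational hθ M
  have hr_pos : (0 : ℝ) < r.den := mod_cast r.den_pos
  obtain ⟨hKr, hδr⟩ := max_lt_iff.1 (hM.trans (mod_cast hrM : (M : ℝ) < r.den))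
  obtain ⟨p, q, hq, hmem, hq_le, hqθ⟩ := happ θ r hr hKr
  refine ⟨p / q, hmem, hden _ ?_, abs_sub_intCast_div_le_div_den_sq hq ?_⟩
  · have hq_one : (1 : ℝ) ≤ |(q : ℝ)| := mod_cast Int.one_le_abs hq
    calc |θ - ((p / q : ℚ) : ℝ)|
        = |q * θ - p| / |(q : ℝ)| := abs_sub_intCast_div θ p hq
      _ ≤ |q * θ - p| := div_le_self (abs_nonneg _) hq_one
      _ ≤ 3 * K / r.den := hqθ
      _ < δ := (div_lt_comm₀ hδ hr_pos).1 hδr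
  · calc |(q : ℝ)| * |q * θ - p|
        ≤ 2 * K * r.den * (3 * K / r.den) := by gcongr
      _ = 6 * K ^ 2 := by field_simp; norm_num

theorem sullivan_cusp_orbit_approx_general (Γ : Subgroup SL(2, ℤ)) [Γ.FiniteIndex] (x : ℚ) :
    ∀ᵐ θ : ℝ, ∀ ε : ℝ, 0 < ε →
      IsApproximableBy (cuspOrbit Γ x) (fun q ↦ ε / (q : ℝ) ^ 2) θ := by
  obtain ⟨C, hC, happ⟩ := exists_forall_irrational_isApproximableBy_cuspOrbit Γ x
  have hirr : ∀ᵐ θ : ℝ, Irrational θ := (Set.countable_range ((↑) : ℚ → ℝ)).ae_notMem volume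
  filter_upwards [hirr, IsApproximableBy.ae_forall_div_sq (cuspOrbit Γ x) hC] with θ hθ hscale
  exact hscale (happ θ hθ)

/-- Sullivan's theorem: if `P` is the orbit of a cusp of a finite-index subgroup of
`SL₂(ℤ)`, then for every `ε > 0`, almost every `θ ∈ [0,1]` admits infinitely many
reduced fractions `p/q ∈ P` with `|θ − p/q| ≤ ε/q²`. -/
theorem sullivan_cusp_orbit_approx
    (Γ : Subgroup (Matrix.SpecialLinearGroup (Fin 2) ℤ)) (hΓ : Γ.FiniteIndex)
    (x : ℚ) (P : Set ℚ) (hP : P = cuspOrbit Γ x) (ε : ℝ) (hε : 0 < ε) :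
    ∀ᵐ θ ∂(volume.restrict (Set.Icc (0 : ℝ) 1)),
      ∀ N : ℕ, ∃ r ∈ P, N < r.den ∧ |θ - (r : ℝ)| ≤ ε / (r.den : ℝ) ^ 2 := by
  subst hP
  filter_upwards [ae_restrict_of_ae (sullivan_cusp_orbit_approx_general Γ x)] with θ hθ
  exact hθ ε hε
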